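/- arXiv:1709.08894 — 2 statements merged into one kernel-verified Lean document; each statement's English description precedes it below -/
import Mathlib

section
/- Let μ and ν be probability measures on ℝⁿ with finite first moments, let f* : ℝⁿ → ℝ be a 1-Lipschitz function maximizing ∫ f dμ − ∫ f dν over all 1-Lipschitz f, and assume f* is differentiable everywhere. Let π* be a coupling of μ and ν minimizing ∫‖x−y‖ dπ. Then for π*-almost every pair (x, y) with x ≠ y and every t ∈ (0,1), setting x_t = t·x + (1−t)·y, the gradient of f* at x_t is the unit vector (x − y)/‖x − y‖ pointing along the line from the generated point y toward the real point x. -/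
open MeasureTheory

section aux
variable {E : Type*} [NormedAddCommGroup E]

/-- Potential from cyclical monotonicity. -/
theorem exists_potential (S : Set (E × E)) (hS : S.Nonempty)
    (hc : ∀ (N : ℕ) (p : Fin (N+1) → E × E), (∀ i, p i ∈ S) → ∀ σ : Equiv.Perm (Fin (N+1)),
      ∑ i, dist (p i).1 (p i).2 ≤ ∑ i, dist (p (σ i)).1 (p i).2) :
    ∃ g : E → ℝ, LipschitzWith 1 g ∧ ∀ q ∈ S, dist q.1 q.2 ≤ g q.1 - g q.2 := by
  obtain ⟨q0, hq0⟩ := hS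
  let F : (ℕ × (ℕ → S)) → E → ℝ := fun a z =>
    dist (0:E) (a.2 0).1.1 + ∑ i ∈ Finset.range a.1, dist (a.2 (i+1)).1.1 (a.2 i).1.2
      - ∑ i ∈ Finset.range (a.1+1), dist (a.2 i).1.1 (a.2 i).1.2 + dist (a.2 a.1).1.2 z
  have hbd : ∀ z, BddBelow (Set.range fun a => F a z) := by
    intro z
    refine ⟨-dist (0:E) z, ?_⟩
    rintro _ ⟨⟨N, p⟩, rfl⟩
    have h := hc N (fun i => (p i).1) (fun i => (p i).2) (finRotate (N+1))
    have h1 : ∑ i : Fin (N+1), dist (p (finRotate (N+1) i)).1.1 (p i).1.2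
        = ∑ i ∈ Finset.range N, dist (p (i+1)).1.1 (p i).1.2 + dist (p 0).1.1 (p N).1.2 := by
      rw [Fin.sum_univ_castSucc, finRotate_last, Finset.sum_range]
      congr 1
      refine Finset.sum_congr rfl fun i _ => ?_
      have : ((finRotate (N+1) i.castSucc : Fin (N+1)) : ℕ) = i + 1 := by
        rw [coe_finRotate_of_ne_last (Fin.castSucc_lt_last i).ne]; simp
      rw [this]; simp
    rw [h1, ← Finset.sum_range (fun i => dist (p i).1.1 (p i).1.2)] at h
    have t1 := dist_triangle4 (p 0).1.1 0 z (p N).1.2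
    rw [dist_comm _ (0:E), dist_comm z] at t1
    simp only [F]
    linarith
  have : Nonempty (ℕ × (ℕ → S)) := ⟨(0, fun _ => ⟨q0, hq0⟩)⟩
  refine ⟨fun z => ⨅ a, F a z, ?_, ?_⟩
  · refine LipschitzWith.of_le_add fun x y => ?_
    rw [← sub_le_iff_le_add]
    refine le_ciInf fun a => ?_
    have h1 := ciInf_le (hbd x) a
    have h2 := dist_triangle (a.2 a.1).1.2 y x
    rw [dist_comm y x] at h2
    simp only [F] at h1 ⊢
    linarith
  · intro q hq
    have : (⨅ a, F a q.2) + dist q.1 q.2 ≤ ⨅ a, F a q.1 := by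
      refine le_ciInf fun a => ?_
      obtain ⟨N, p⟩ := a
      let p' : ℕ → S := fun i => if i ≤ N then p i else ⟨q, hq⟩
      have h1 := ciInf_le (hbd q.2) (N+1, p')
      have e : F (N+1, p') q.2 = F (N, p) q.1 - dist q.1 q.2 := by
        have e1 : ∑ i ∈ Finset.range N, dist (p' (i+1)).1.1 (p' i).1.2
          = ∑ i ∈ Finset.range N, dist (p (i+1)).1.1 (p i).1.2 :=
          Finset.sum_congr rfl fun i hi => by
            have := Finset.mem_range.1 hi
            simp only [p']; rw [if_pos (by omega), if_pos (by omega)]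
        have e2 : ∑ i ∈ Finset.range (N+1), dist (p' i).1.1 (p' i).1.2
          = ∑ i ∈ Finset.range (N+1), dist (p i).1.1 (p i).1.2 :=
          Finset.sum_congr rfl fun i hi => by
            have := Finset.mem_range.1 hi
            simp only [p']; rw [if_pos (by omega)]
        simp only [F]
        rw [Finset.sum_range_succ _ N, Finset.sum_range_succ _ (N+1), e1, e2]
        simp [p']
        rw [dist_comm q.1 (p N).1.2]
        ring
      linarith
    linarith

variable [MeasurableSpace E] [BorelSpace E] [SecondCountableTopology E]

theorem integ_near (ρ : Measure (E × E)) [IsProbabilityMeasure ρ] (a b : E) (δ : ℝ)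
    (h : ∀ᵐ p ∂ρ, dist p.1 a < δ ∧ dist p.2 b < δ) :
    Integrable (fun p => dist p.1 p.2) ρ ∧ |∫ p, dist p.1 p.2 ∂ρ - dist a b| ≤ 2 * δ := by
  have hb : ∀ᵐ p ∂ρ, ‖dist p.1 p.2 - dist a b‖ ≤ 2 * δ := by
    filter_upwards [h] with p hp
    have := dist_dist_dist_le p.1 p.2 a b
    rw [Real.dist_eq] at this
    rw [Real.norm_eq_abs]; linarith
  have hm : AEStronglyMeasurable (fun p : E × E => dist p.1 p.2 - dist a b) ρ := by
    apply Continuous.aestronglyMeasurable; fun_prop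
  have hi : Integrable (fun p : E × E => dist p.1 p.2 - dist a b) ρ :=
    Integrable.of_bound hm _ hb
  have hi' : Integrable (fun p : E × E => dist p.1 p.2) ρ := by
    exact (integrable_add_const_iff (c := -dist a b)).1 (by simpa only [sub_eq_add_neg] using hi)
  refine ⟨hi', ?_⟩
  have := norm_integral_le_of_norm_le_const hb
  rw [integral_sub hi' (integrable_const _)] at this
  simpa using this

theorem integ_coupling {μ ν : Measure E} {π : Measure (E × E)}
    (hμ : Integrable (fun x => ‖x‖) μ) (hν : Integrable (fun x => ‖x‖) ν)
    (h1 : π.map Prod.fst = μ) (h2 : π.map Prod.snd = ν) :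
    Integrable (fun p => dist p.1 p.2) π := by
  subst h1 h2
  have i1 := hμ.comp_measurable measurable_fst
  have i2 := hν.comp_measurable measurable_snd
  refine (i1.add i2).mono' (by apply Continuous.aestronglyMeasurable; fun_prop) ?_
  filter_upwards with p
  simp only [Real.norm_eq_abs, abs_dist, Pi.add_apply, Function.comp]
  rw [dist_eq_norm]; exact norm_sub_le _ _

theorem cyc_mono {μ ν : Measure E} {πs : Measure (E × E)} [IsProbabilityMeasure μ]
    [IsProbabilityMeasure πs]
    (hμ : Integrable (fun x => ‖x‖) μ) (hν : Integrable (fun x => ‖x‖) ν)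
    (h1 : πs.map Prod.fst = μ) (h2 : πs.map Prod.snd = ν)
    (hopt : ∀ π : Measure (E × E),
        IsProbabilityMeasure π → π.map Prod.fst = μ → π.map Prod.snd = ν →
          ∫ p, ‖p.1 - p.2‖ ∂πs ≤ ∫ p, ‖p.1 - p.2‖ ∂π)
    (N : ℕ) (p : Fin (N+1) → E × E) (hp : ∀ i, p i ∈ πs.support) (σ : Equiv.Perm (Fin (N+1))) :
    ∑ i, dist (p i).1 (p i).2 ≤ ∑ i, dist (p (σ i)).1 (p i).2 := by
  simp only [← dist_eq_norm] at hopt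
  have key : ∀ δ : ℝ, 0 < δ →
      ∑ i, dist (p i).1 (p i).2 ≤ ∑ i, dist (p (σ i)).1 (p i).2 + δ * (4 * (N+1)) := by
    intro δ hδ
    let U : Fin (N+1) → Set (E × E) := fun i => Metric.ball (p i) δ
    have hUm : ∀ i, MeasurableSet (U i) := fun i => Metric.isOpen_ball.measurableSet
    have hU : ∀ i, πs (U i) ≠ 0 := fun i =>
      ((Measure.mem_support_iff_forall _).1 (hp i) _ (Metric.ball_mem_nhds _ hδ)).ne'
    obtain ⟨i0, hi0⟩ := Finite.exists_min (fun i => πs (U i))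
    let κ : Fin (N+1) → Measure (E × E) := fun i => ProbabilityTheory.cond πs (U i)
    have : ∀ i, IsProbabilityMeasure (κ i) := fun i =>
      ProbabilityTheory.cond_isProbabilityMeasure (hU i)
    let τ : Fin (N+1) → Measure (E × E) := fun i =>
      ((κ (σ i)).map Prod.fst).prod ((κ i).map Prod.snd)
    have : ∀ i, IsProbabilityMeasure ((κ i).map Prod.fst) := fun i =>
      Measure.isProbabilityMeasure_map measurable_fst.aemeasurable
    have : ∀ i, IsProbabilityMeasure ((κ i).map Prod.snd) := fun i =>
      Measure.isProbabilityMeasure_map measurable_snd.aemeasurable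
    have hκae : ∀ i, ∀ᵐ q ∂(κ i), dist q.1 (p i).1 < δ ∧ dist q.2 (p i).2 < δ := by
      intro i
      filter_upwards [ProbabilityTheory.ae_cond_mem (hUm i)] with q hq
      have : dist q (p i) < δ := hq
      rwa [Prod.dist_eq, max_lt_iff] at this
    have hτae : ∀ i, ∀ᵐ q ∂(τ i), dist q.1 (p (σ i)).1 < δ ∧ dist q.2 (p i).2 < δ := by
      intro i
      have a1 : ∀ᵐ x ∂((κ (σ i)).map Prod.fst), dist x (p (σ i)).1 < δ := by
        rw [ae_map_iff measurable_fst.aemeasurable (Metric.isOpen_ball.measurableSet)]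
        exact (hκae _).mono fun _ h => h.1
      have a2 : ∀ᵐ x ∂((κ i).map Prod.snd), dist x (p i).2 < δ := by
        rw [ae_map_iff measurable_snd.aemeasurable (Metric.isOpen_ball.measurableSet)]
        exact (hκae _).mono fun _ h => h.2
      exact (Measure.quasiMeasurePreserving_fst.ae a1).and
        (Measure.quasiMeasurePreserving_snd.ae a2)
    let ε : ENNReal := πs (U i0) * ((N+1 : ℕ) : ENNReal)⁻¹
    have hε0 : ε ≠ 0 := mul_ne_zero (hU i0) (by simp)
    have hεt : ε ≠ ⊤ := ENNReal.mul_ne_top (measure_ne_top _ _) (by simp)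
    let A : Measure (E × E) := ε • ∑ i, κ i
    let B : Measure (E × E) := ε • ∑ i, τ i
    have hA : A ≤ πs := by
      refine Measure.le_iff.2 fun s hs => ?_
      have hk : ∀ i, ε * κ i s ≤ ((N+1 : ℕ) : ENNReal)⁻¹ * πs s := by
        intro i
        simp only [κ, ε]
        rw [ProbabilityTheory.cond_apply (hUm i)]
        calc πs (U i0) * ((N+1 : ℕ) : ENNReal)⁻¹ * ((πs (U i))⁻¹ * πs (U i ∩ s))
            ≤ πs (U i) * ((N+1 : ℕ) : ENNReal)⁻¹ * ((πs (U i))⁻¹ * πs s) := by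
              exact mul_le_mul' (mul_le_mul' (hi0 i) le_rfl)
                (mul_le_mul' le_rfl (measure_mono Set.inter_subset_right))
          _ = (πs (U i) * (πs (U i))⁻¹) * (((N+1 : ℕ) : ENNReal)⁻¹ * πs s) := by ring
          _ = _ := by rw [ENNReal.mul_inv_cancel (hU i) (measure_ne_top _ _), one_mul]
      simp only [A, Measure.smul_apply, Measure.finsetSum_apply, smul_eq_mul, Finset.mul_sum]
      refine (Finset.sum_le_sum fun i _ => hk i).trans ?_
      rw [Finset.sum_const, Finset.card_univ, Fintype.card_fin, nsmul_eq_mul, ← mul_assoc,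
        ENNReal.mul_inv_cancel (by simp) (by simp), one_mul]
    have : IsFiniteMeasure A := ⟨(hA _).trans_lt (measure_lt_top _ _)⟩
    let R := πs - A
    have hR : R + A = πs := Measure.sub_add_cancel_of_le hA
    have hAB1 : B.map Prod.fst = A.map Prod.fst := by
      simp only [A, B, Measure.map_smul]
      rw [Measure.map_finset_sum (by fun_prop), Measure.map_finset_sum (by fun_prop)]
      congr 1
      rw [← Equiv.sum_comp σ (fun i => Measure.map Prod.fst (κ i))]
      refine Finset.sum_congr rfl fun i _ => ?_
      simp [τ, Measure.map_fst_prod]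
    have hAB2 : B.map Prod.snd = A.map Prod.snd := by
      simp only [A, B, Measure.map_smul]
      rw [Measure.map_finset_sum (by fun_prop), Measure.map_finset_sum (by fun_prop)]
      congr 1
      refine Finset.sum_congr rfl fun i _ => ?_
      simp [τ, Measure.map_snd_prod]
    have m1 : (R + B).map Prod.fst = μ := by
      rw [Measure.map_add _ _ measurable_fst, hAB1, ← Measure.map_add _ _ measurable_fst, hR, h1]
    have m2 : (R + B).map Prod.snd = ν := by
      rw [Measure.map_add _ _ measurable_snd, hAB2, ← Measure.map_add _ _ measurable_snd, hR, h2]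
    have hprob : IsProbabilityMeasure (R + B) := by
      constructor
      have := measure_univ (μ := μ)
      rwa [← m1, Measure.map_apply measurable_fst MeasurableSet.univ, Set.preimage_univ] at this
    have hle := hopt _ hprob m1 m2
    have I1 := integ_coupling hμ hν h1 h2
    have I2 := integ_coupling hμ hν m1 m2
    rw [← hR] at hle I1
    rw [integral_add_measure I1.left_of_add_measure I1.right_of_add_measure,
      integral_add_measure I2.left_of_add_measure I2.right_of_add_measure] at hle
    have hle2 := (add_le_add_iff_left _).1 hle
    simp only [A, B, integral_smul_measure] at hle2
    rw [integral_finsetSum_measure (fun i _ => (integ_near _ _ _ _ (hκae i)).1),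
      integral_finsetSum_measure (fun i _ => (integ_near _ _ _ _ (hτae i)).1)] at hle2
    have hle3 := le_of_mul_le_mul_left hle2 (ENNReal.toReal_pos hε0 hεt)
    have b1 : ∑ i, (dist (p i).1 (p i).2 - 2 * δ) ≤ ∑ i, ∫ q, dist q.1 q.2 ∂(κ i) :=
      Finset.sum_le_sum fun i _ => by
        have := abs_le.1 (integ_near _ _ _ _ (hκae i)).2; linarith [this.1]
    have b2 : ∑ i, ∫ q, dist q.1 q.2 ∂(τ i) ≤ ∑ i, (dist (p (σ i)).1 (p i).2 + 2 * δ) :=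
      Finset.sum_le_sum fun i _ => by
        have := abs_le.1 (integ_near _ _ _ _ (hτae i)).2; linarith [this.2]
    rw [Finset.sum_sub_distrib] at b1
    rw [Finset.sum_add_distrib] at b2
    simp at b1 b2
    linarith
  refine le_of_forall_pos_le_add fun η hη => ?_
  have := key (η / (4 * (N+1))) (by positivity)
  rwa [div_mul_cancel₀ _ (by positivity)] at this

theorem lip_integ {μ : Measure E} [IsFiniteMeasure μ] (hμ : Integrable (fun x => ‖x‖) μ)
    {g : E → ℝ} (hg : LipschitzWith 1 g) : Integrable g μ := by
  refine ((integrable_const (‖g 0‖)).add hμ).mono' hg.continuous.aestronglyMeasurable ?_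
  filter_upwards with x
  have := hg.dist_le_mul x 0
  simp only [NNReal.coe_one, one_mul, dist_zero_right, dist_eq_norm] at this
  have h2 := norm_sub_norm_le (g x) (g 0)
  simp only [Pi.add_apply]
  simp only [sub_zero] at this
  linarith

end aux

theorem grad_eq {E : Type*} [NormedAddCommGroup E] [InnerProductSpace ℝ E] [CompleteSpace E]
    {f : E → ℝ} (hf : LipschitzWith 1 f) (hd : Differentiable ℝ f) {x y : E} (hxy : x ≠ y)
    (h : dist x y ≤ f x - f y) {t : ℝ} (ht : t ∈ Set.Ioo (0:ℝ) 1) :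
    gradient f (t • x + (1 - t) • y) = ‖x - y‖⁻¹ • (x - y) := by
  have hpos : 0 < ‖x - y‖ := norm_pos_iff.2 (sub_ne_zero.2 hxy)
  rw [dist_eq_norm] at h
  set z := t • x + (1 - t) • y with hz
  have hlip : ∀ a b, f a - f b ≤ ‖a - b‖ := fun a b => by
    have := hf.dist_le_mul a b
    rw [Real.dist_eq, NNReal.coe_one, one_mul, dist_eq_norm] at this
    exact (le_abs_self _).trans this
  have hline : ∀ s ∈ Set.Ioo (0:ℝ) 1, f (s • x + (1 - s) • y) = f y + s * ‖x - y‖ := by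
    intro s hs
    have a1 := hlip x (s • x + (1 - s) • y)
    have a2 := hlip (s • x + (1 - s) • y) y
    rw [show x - (s • x + (1 - s) • y) = (1 - s) • (x - y) by module, norm_smul,
      Real.norm_of_nonneg (by linarith [hs.2])] at a1
    rw [show (s • x + (1 - s) • y) - y = s • (x - y) by module, norm_smul,
      Real.norm_of_nonneg hs.1.le] at a2
    linarith
  have hγ : HasDerivAt (fun s : ℝ => s • x + (1 - s) • y) (x - y) t := by
    have := ((hasDerivAt_id t).smul_const x).add (((hasDerivAt_id t).const_sub 1).smul_const y)
    exact this.congr_deriv (by module)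
  have d1 : HasDerivAt (fun s : ℝ => f (s • x + (1 - s) • y)) (fderiv ℝ f z (x - y)) t :=
    (hd z).hasFDerivAt.comp_hasDerivAt t hγ
  have d2 : HasDerivAt (fun s : ℝ => f (s • x + (1 - s) • y)) (‖x - y‖) t := by
    have : HasDerivAt (fun s : ℝ => f y + s * ‖x - y‖) (‖x - y‖) t := by
      simpa using ((hasDerivAt_id t).mul_const (‖x - y‖)).const_add (f y)
    refine this.congr_of_eventuallyEq ?_
    filter_upwards [isOpen_Ioo.mem_nhds ht] with s hs using hline s hs
  have e := d1.unique d2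
  have hn : ‖gradient f z‖ ≤ 1 := by
    have := norm_fderiv_le_of_lipschitz ℝ hf (x₀ := z)
    simpa [gradient] using this
  have hin : inner ℝ (gradient f z) (x - y) = ‖x - y‖ := by
    rw [← e]; simp [gradient]
  have hun : ‖‖x - y‖⁻¹ • (x - y)‖ = 1 := by
    rw [norm_smul, norm_inv, norm_norm, inv_mul_cancel₀ hpos.ne']
  have hsq := norm_sub_sq_real (gradient f z) (‖x - y‖⁻¹ • (x - y))
  rw [hun, inner_smul_right, hin, inv_mul_cancel₀ hpos.ne'] at hsq
  have : ‖gradient f z - ‖x - y‖⁻¹ • (x - y)‖ = 0 := by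
    have h0 := norm_nonneg (gradient f z)
    apply pow_eq_zero_iff (two_ne_zero) |>.1
    nlinarith [sq_nonneg (‖gradient f z - ‖x - y‖⁻¹ • (x - y)‖)]
  exact sub_eq_zero.1 (norm_eq_zero.1 this)

/-- **Gradient direction of a differentiable optimal critic between coupled points.**
For an everywhere differentiable optimal 1-Lipschitz critic `f*` and an optimal
coupling `π*`, for `π*`-almost every `(x, y)` with `x ≠ y` and every `t ∈ (0,1)`,
the gradient of `f*` at `x_t = t·x + (1−t)·y` is the unit vector `(x − y)/‖x − y‖`. -/
theorem gradient_of_optimal_critic_eq_unit_direction (n : ℕ)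
    (μ ν : Measure (EuclideanSpace ℝ (Fin n)))
    [IsProbabilityMeasure μ] [IsProbabilityMeasure ν]
    (hμ : Integrable (fun x => ‖x‖) μ) (hν : Integrable (fun x => ‖x‖) ν)
    (f : EuclideanSpace ℝ (Fin n) → ℝ) (hf : LipschitzWith 1 f)
    (hfopt : ∀ g : EuclideanSpace ℝ (Fin n) → ℝ, LipschitzWith 1 g →
        ∫ x, g x ∂μ - ∫ x, g x ∂ν ≤ ∫ x, f x ∂μ - ∫ x, f x ∂ν)
    (hdiff : Differentiable ℝ f)
    (πs : Measure (EuclideanSpace ℝ (Fin n) × EuclideanSpace ℝ (Fin n)))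
    [IsProbabilityMeasure πs]
    (hπ₁ : πs.map Prod.fst = μ) (hπ₂ : πs.map Prod.snd = ν)
    (hπopt : ∀ π : Measure (EuclideanSpace ℝ (Fin n) × EuclideanSpace ℝ (Fin n)),
        IsProbabilityMeasure π → π.map Prod.fst = μ → π.map Prod.snd = ν →
          ∫ p, ‖p.1 - p.2‖ ∂πs ≤ ∫ p, ‖p.1 - p.2‖ ∂π) :
    ∀ᵐ p ∂πs, p.1 ≠ p.2 → ∀ t ∈ Set.Ioo (0 : ℝ) 1,
      gradient f (t • p.1 + (1 - t) • p.2) = ‖p.1 - p.2‖⁻¹ • (p.1 - p.2) := by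
  obtain ⟨g, hg, hgS⟩ := exists_potential πs.support
    (Measure.nonempty_support (IsProbabilityMeasure.ne_zero πs))
    (fun N p hp σ => cyc_mono hμ hν hπ₁ hπ₂ hπopt N p hp σ)
  have hdI := integ_coupling hμ hν hπ₁ hπ₂
  have hsplit : ∀ k : EuclideanSpace ℝ (Fin n) → ℝ, LipschitzWith 1 k →
      Integrable (fun p => k p.1 - k p.2) πs ∧
      ∫ x, k x ∂μ - ∫ x, k x ∂ν = ∫ p, (k p.1 - k p.2) ∂πs := by
    intro k hk
    have i1 := lip_integ hμ hk
    have i2 := lip_integ hν hk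
    rw [← hπ₁] at i1
    rw [← hπ₂] at i2
    have j1 : Integrable (fun p => k p.1) πs := i1.comp_measurable measurable_fst
    have j2 : Integrable (fun p => k p.2) πs := i2.comp_measurable measurable_snd
    refine ⟨j1.sub j2, ?_⟩
    rw [integral_sub j1 j2, ← hπ₁, ← hπ₂, integral_map measurable_fst.aemeasurable i1.1,
      integral_map measurable_snd.aemeasurable i2.1]
  obtain ⟨gi, ge⟩ := hsplit g hg
  obtain ⟨fi, fe⟩ := hsplit f hf
  have hle := hfopt g hg
  rw [ge, fe] at hle
  have hge : ∫ p, dist p.1 p.2 ∂πs ≤ ∫ p, (g p.1 - g p.2) ∂πs := by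
    refine integral_mono_ae hdI gi ?_
    filter_upwards [Measure.support_mem_ae (μ := πs)] with q hq using hgS q hq
  have hnn : 0 ≤ fun p : EuclideanSpace ℝ (Fin n) × EuclideanSpace ℝ (Fin n) =>
      dist p.1 p.2 - (f p.1 - f p.2) := by
    intro p
    have := hf.dist_le_mul p.1 p.2
    rw [Real.dist_eq, NNReal.coe_one, one_mul] at this
    exact sub_nonneg.2 ((le_abs_self _).trans this)
  have hz : ∫ p, (dist p.1 p.2 - (f p.1 - f p.2)) ∂πs = 0 := by
    refine le_antisymm ?_ (integral_nonneg hnn)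
    rw [integral_sub hdI fi]
    linarith
  have hae := (integral_eq_zero_iff_of_nonneg hnn (hdI.sub fi)).1 hz
  filter_upwards [hae] with p hp hne t ht
  refine grad_eq hf hdiff hne ?_ ht
  have : dist p.1 p.2 - (f p.1 - f p.2) = 0 := hp
  linarith
end

section
/- Let μ and ν be probability measures on ℝⁿ with finite first moments, let f* : ℝⁿ → ℝ be a 1-Lipschitz function maximizing ∫ f dμ − ∫ f dν over all 1-Lipschitz f, and assume f* is differentiable everywhere. Let π* be a coupling of μ and ν minimizing ∫‖x−y‖ dπ. Then for π*-almost every pair (x, y) with x ≠ y and every t ∈ (0,1), the gradient of f* at x_t = t·x + (1−t)·y has Euclidean norm equal to 1. -/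
open MeasureTheory

inductive KPath {E : Type*} [NormedAddCommGroup E] (Γ : Set (E × E)) (o : E) : E → ℝ → Prop
  | nil : KPath Γ o o 0
  | lip (a b : E) (c : ℝ) : KPath Γ o a c → KPath Γ o b (c + ‖a - b‖)
  | edge (a b : E) (c : ℝ) : KPath Γ o a c → (a, b) ∈ Γ → KPath Γ o b (c - ‖a - b‖)

lemma KPath.chain {E : Type*} [NormedAddCommGroup E] {Γ : Set (E × E)} {o b : E} {c : ℝ}
    (h : KPath Γ o b c) : ‖o - b‖ ≤ c ∨ ∃ (k : ℕ) (x y : ℕ → E), (∀ i, i ≤ k → (x i, y i) ∈ Γ) ∧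
      ‖o - x 0‖ + ∑ i ∈ Finset.range k, ‖x (i+1) - y i‖
        - ∑ i ∈ Finset.range (k+1), ‖x i - y i‖ + ‖y k - b‖ ≤ c := by
  induction h with
  | nil => left; simp
  | lip a b c h ih =>
    rcases ih with ih | ⟨k, x, y, h1, h2⟩
    · left
      have := norm_sub_le_norm_sub_add_norm_sub o a b
      linarith
    · right
      refine ⟨k, x, y, h1, ?_⟩
      have := norm_sub_le_norm_sub_add_norm_sub (y k) a b
      linarith
  | edge a b c h hab ih =>
    right
    rcases ih with ih | ⟨k, x, y, h1, h2⟩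
    · refine ⟨0, fun _ => a, fun _ => b, fun _ _ => hab, ?_⟩
      simp
      linarith
    · refine ⟨k + 1, fun i => if i ≤ k then x i else a, fun i => if i ≤ k then y i else b, ?_, ?_⟩
      · intro i hi
        by_cases h : i ≤ k
        · simpa [h] using h1 i h
        · simpa [h] using hab
      · have e1 : ∑ i ∈ Finset.range k, ‖(if i + 1 ≤ k then x (i+1) else a) -
            (if i ≤ k then y i else b)‖ = ∑ i ∈ Finset.range k, ‖x (i+1) - y i‖ := by
          refine Finset.sum_congr rfl fun i hi => ?_
          have := Finset.mem_range.1 hi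
          rw [if_pos (by omega), if_pos (by omega)]
        have e2 : ∑ i ∈ Finset.range (k+1), ‖(if i ≤ k then x i else a) -
            (if i ≤ k then y i else b)‖ = ∑ i ∈ Finset.range (k+1), ‖x i - y i‖ := by
          refine Finset.sum_congr rfl fun i hi => ?_
          have := Finset.mem_range.1 hi
          rw [if_pos (by omega), if_pos (by omega)]
        rw [Finset.sum_range_succ, Finset.sum_range_succ (n := k+1)]
        rw [e1, e2]
        simp
        rw [norm_sub_rev a (y k)]
        linarith

lemma KPath.nonneg {E : Type*} [NormedAddCommGroup E] {Γ : Set (E × E)}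
    (hΓ : ∀ (k : ℕ) (x y : Fin (k+1) → E) (σ : Equiv.Perm (Fin (k+1))), (∀ i, (x i, y i) ∈ Γ) →
      ∑ i, ‖x i - y i‖ ≤ ∑ i, ‖x (σ i) - y i‖) {o : E} {c : ℝ}
    (h : KPath Γ o o c) : 0 ≤ c := by
  rcases h.chain with h | ⟨k, x, y, h1, h2⟩
  · simpa using h
  · have := hΓ k (fun i => x i) (fun i => y i) (finRotate (k+1)) (fun i => h1 i (by omega))
    rw [Fin.sum_univ_castSucc (fun i => ‖x (finRotate (k+1) i : Fin (k+1)) - y i‖)] at this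
    rw [Fin.sum_univ_eq_sum_range (fun i => ‖x i - y i‖) (k+1)] at this
    have e : ∀ i : Fin k, ‖x (finRotate (k+1) i.castSucc : Fin (k+1)) - y i.castSucc‖
        = ‖x (i + 1) - y i‖ := by
      intro i
      simp
    simp only [e] at this
    rw [Fin.sum_univ_eq_sum_range (fun i => ‖x (i+1) - y i‖) k] at this
    simp at this
    have t := norm_sub_le_norm_sub_add_norm_sub (y k) o (x 0)
    rw [norm_sub_rev (x 0)] at this
    linarith

lemma exists_potential_s10 {E : Type*} [NormedAddCommGroup E] {Γ : Set (E × E)}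
    (hΓ : ∀ (k : ℕ) (x y : Fin (k+1) → E) (σ : Equiv.Perm (Fin (k+1))), (∀ i, (x i, y i) ∈ Γ) →
      ∑ i, ‖x i - y i‖ ≤ ∑ i, ‖x (σ i) - y i‖) :
    ∃ g : E → ℝ, LipschitzWith 1 g ∧ ∀ p ∈ Γ, ‖p.1 - p.2‖ ≤ g p.1 - g p.2 := by
  have bdd : ∀ z, BddBelow {c | KPath Γ 0 z c} := by
    intro z
    refine ⟨-‖z - 0‖, fun c hc => ?_⟩
    have := KPath.nonneg hΓ (KPath.lip z 0 c hc)
    linarith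
  have ne : ∀ z, {c | KPath Γ 0 z c}.Nonempty := fun z => ⟨_, KPath.lip 0 z 0 KPath.nil⟩
  refine ⟨fun z => sInf {c | KPath Γ 0 z c}, ?_, ?_⟩
  · refine LipschitzWith.of_le_add fun a b => ?_
    rw [← sub_le_iff_le_add]
    refine le_csInf (ne b) fun c hc => ?_
    rw [sub_le_iff_le_add, dist_eq_norm, norm_sub_rev]
    exact csInf_le (bdd a) (KPath.lip b a c hc)
  · rintro ⟨a, b⟩ hab
    simp only
    rw [le_sub_iff_add_le]
    refine le_csInf (ne a) fun c hc => ?_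
    have := csInf_le (bdd b) (KPath.edge a b c hc hab)
    linarith

lemma grad_one {E : Type*} [NormedAddCommGroup E] [InnerProductSpace ℝ E] [CompleteSpace E]
    (f : E → ℝ) (hf : LipschitzWith 1 f) (hdiff : Differentiable ℝ f) (x y : E) (hxy : x ≠ y)
    (h : ‖x - y‖ ≤ f x - f y) (t : ℝ) (ht : t ∈ Set.Ioo (0:ℝ) 1) :
    ‖gradient f (t • x + (1 - t) • y)‖ = 1 := by
  have hn : ‖gradient f (t • x + (1 - t) • y)‖ = ‖fderiv ℝ f (t • x + (1 - t) • y)‖ := by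
    simp [gradient]
  rw [hn]
  have hL : 0 < ‖x - y‖ := norm_pos_iff.2 (sub_ne_zero.2 hxy)
  refine le_antisymm (by simpa using norm_fderiv_le_of_lipschitz ℝ hf) ?_
  have lip : ∀ a b, f a - f b ≤ ‖a - b‖ := by
    intro a b
    have := hf.dist_le_mul a b
    rw [Real.dist_eq, dist_eq_norm] at this
    have := le_abs_self (f a - f b)
    simp at *
    linarith
  have lin : ∀ s ∈ Set.Ioo (0:ℝ) 1, f (s • x + (1 - s) • y) = f y + s * ‖x - y‖ := by
    intro s hs
    have h1 := lip (s • x + (1 - s) • y) y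
    have h2 := lip x (s • x + (1 - s) • y)
    rw [show s • x + (1 - s) • y - y = s • (x - y) by module, norm_smul, Real.norm_of_nonneg hs.1.le] at h1
    rw [show x - (s • x + (1 - s) • y) = (1 - s) • (x - y) by module, norm_smul, Real.norm_of_nonneg (by linarith [hs.2])] at h2
    linarith
  have d1 : HasDerivAt (fun s : ℝ => s • x + (1 - s) • y) (x - y) t := by
    have := ((hasDerivAt_id t).smul_const x).add (((hasDerivAt_id t).const_sub 1).smul_const y)
    exact this.congr_deriv (by module)
  have d2 := (hdiff (t • x + (1 - t) • y)).hasFDerivAt.comp_hasDerivAt t d1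
  have d3 : HasDerivAt (fun s : ℝ => f y + s * ‖x - y‖) ‖x - y‖ t := by
    simpa using ((hasDerivAt_id t).mul_const ‖x - y‖).const_add (f y)
  have d4 := d3.congr_of_eventuallyEq (f₁ := f ∘ (fun s : ℝ => s • x + (1 - s) • y)) (by
    filter_upwards [Ioo_mem_nhds ht.1 ht.2] with s hs
    exact lin s hs)
  have e := d2.unique d4
  have := (fderiv ℝ f (t • x + (1 - t) • y)).le_opNorm (x - y)
  rw [e, norm_norm] at this
  by_contra hc
  push Not at hc
  nlinarith

lemma cyc_mono_s10 {E : Type*} [NormedAddCommGroup E] [MeasurableSpace E] [BorelSpace E]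
    [SecondCountableTopology E] (π : Measure (E × E)) [IsProbabilityMeasure π]
    (hint : Integrable (fun p : E × E => ‖p.1 - p.2‖) π)
    (hopt : ∀ π' : Measure (E × E), IsProbabilityMeasure π' → π'.map Prod.fst = π.map Prod.fst →
      π'.map Prod.snd = π.map Prod.snd → ∫ p, ‖p.1 - p.2‖ ∂π ≤ ∫ p, ‖p.1 - p.2‖ ∂π')
    {ι : Type*} [Fintype ι] [Nonempty ι] (x y : ι → E) (σ : Equiv.Perm ι)
    (hxy : ∀ i, (x i, y i) ∈ π.support) :
    ∑ i, ‖x i - y i‖ ≤ ∑ i, ‖x (σ i) - y i‖ := by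
  classical
  have hN : (0:ℝ) < Fintype.card ι := by exact_mod_cast Fintype.card_pos
  refine le_of_forall_pos_le_add fun ε hε => ?_
  set δ : ℝ := ε / (4 * Fintype.card ι) with hδ
  have hδ0 : 0 < δ := by positivity
  set A : ι → Set (E × E) := fun i => Metric.ball (x i) δ ×ˢ Metric.ball (y i) δ with hA
  have hAm : ∀ i, MeasurableSet (A i) := fun i => measurableSet_ball.prod measurableSet_ball
  have hApos : ∀ i, 0 < π (A i) := fun i =>
    (Measure.mem_support_iff_forall _).1 (hxy i) _
      (prod_mem_nhds (Metric.ball_mem_nhds _ hδ0) (Metric.ball_mem_nhds _ hδ0))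
  set P : ι → Measure (E × E) := fun i => ProbabilityTheory.cond π (A i) with hP
  have hPp : ∀ i, IsProbabilityMeasure (P i) := fun i =>
    ProbabilityTheory.cond_isProbabilityMeasure (hApos i).ne'
  have hPae : ∀ i, ∀ᵐ p ∂(P i), p ∈ A i := fun i => ProbabilityTheory.ae_cond_mem (hAm i)
  set m : ENNReal := Finset.univ.inf fun i => π (A i) with hm
  have hm0 : 0 < m := by
    rw [hm, Finset.lt_inf_iff (by simp)]
    exact fun i _ => hApos i
  have hmle : ∀ i, m ≤ π (A i) := fun i => Finset.inf_le (Finset.mem_univ i)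
  have hmtop : m ≠ ⊤ := ne_top_of_le_ne_top (measure_ne_top π _) (hmle (Classical.arbitrary ι))
  set c : ENNReal := m / Fintype.card ι with hc
  have hcard0 : (Fintype.card ι : ENNReal) ≠ 0 := by simp
  have hc0 : c ≠ 0 := ENNReal.div_ne_zero.2 ⟨hm0.ne', by simp⟩
  have hctop : c ≠ ⊤ := ENNReal.div_ne_top hmtop hcard0
  have hcP : ∀ i, c • P i ≤ (Fintype.card ι : ENNReal)⁻¹ • π := by
    intro i
    rw [Measure.le_iff]
    intro s hs
    simp only [hP, Measure.smul_apply, smul_eq_mul, ProbabilityTheory.cond_apply (hAm i)]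
    calc c * ((π (A i))⁻¹ * π (A i ∩ s)) ≤ (π (A i) / Fintype.card ι) * ((π (A i))⁻¹ * π s) := by
          gcongr
          · exact ENNReal.div_le_div_right (hmle i) _
          · exact Set.inter_subset_right
      _ = (π (A i) * (π (A i))⁻¹) * ((Fintype.card ι : ENNReal)⁻¹ * π s) := by
          rw [div_eq_mul_inv]; ring
      _ = _ := by
          rw [ENNReal.mul_inv_cancel (hApos i).ne' (measure_ne_top π _), one_mul]
  set S : Measure (E × E) := ∑ i, c • P i with hS
  have hSle : S ≤ π := by
    calc S ≤ ∑ i : ι, (Fintype.card ι : ENNReal)⁻¹ • π := Finset.sum_le_sum fun i _ => hcP i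
      _ = π := by
        rw [← Finset.sum_smul]
        simp [ENNReal.mul_inv_cancel hcard0]
  have : IsFiniteMeasure S := isFiniteMeasure_of_le π hSle
  set ρ := π - S with hρ
  have hdec : ρ + S = π := Measure.sub_add_cancel_of_le hSle
  set Q : ι → Measure (E × E) := fun i => ((P (σ i)).map Prod.fst).prod ((P i).map Prod.snd) with hQ
  have hm1 : ∀ i, IsProbabilityMeasure ((P i).map Prod.fst) := fun i =>
    Measure.isProbabilityMeasure_map measurable_fst.aemeasurable
  have hm2 : ∀ i, IsProbabilityMeasure ((P i).map Prod.snd) := fun i =>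
    Measure.isProbabilityMeasure_map measurable_snd.aemeasurable
  have hQp : ∀ i, IsProbabilityMeasure (Q i) := fun i => by simp only [hQ]; infer_instance
  set T : Measure (E × E) := ∑ i, c • Q i with hT
  have mapsum : ∀ (R : ι → Measure (E × E)) (g : E × E → E) , Measurable g →
      (∑ i, c • R i).map g = ∑ i, c • (R i).map g := by
    intro R g hg
    rw [← Measure.mapₗ_apply_of_measurable hg, map_sum]
    simp [Measure.mapₗ_apply_of_measurable hg]
  have e1 : (ρ + T).map Prod.fst = π.map Prod.fst := by
    conv_rhs => rw [← hdec]
    rw [Measure.map_add _ _ measurable_fst, Measure.map_add _ _ measurable_fst, hT, hS,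
      mapsum _ _ measurable_fst, mapsum _ _ measurable_fst]
    congr 1
    rw [← Equiv.sum_comp σ (fun i => c • (P i).map Prod.fst)]
    simp [hQ]
  have e2 : (ρ + T).map Prod.snd = π.map Prod.snd := by
    conv_rhs => rw [← hdec]
    rw [Measure.map_add _ _ measurable_snd, Measure.map_add _ _ measurable_snd, hT, hS,
      mapsum _ _ measurable_snd, mapsum _ _ measurable_snd]
    congr 1
    simp [hQ]
  have hprob : IsProbabilityMeasure (ρ + T) := by
    constructor
    have := congrArg (fun κ => κ Set.univ) e1
    simpa [Measure.map_apply measurable_fst MeasurableSet.univ] using this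
  have key := hopt _ hprob e1 e2
  have iρ : Integrable (fun p : E × E => ‖p.1 - p.2‖) ρ := hint.mono_measure Measure.sub_le
  have iS : Integrable (fun p : E × E => ‖p.1 - p.2‖) S := hint.mono_measure hSle
  have iP : ∀ i, Integrable (fun p : E × E => ‖p.1 - p.2‖) (P i) := by
    intro i
    have := (hint.smul_measure (ENNReal.inv_ne_top.2 hcard0)).mono_measure (hcP i)
    exact (integrable_smul_measure hc0 hctop).1 this
  have hmeas : Measurable (fun p : E × E => ‖p.1 - p.2‖) := by fun_prop
  have hQae : ∀ i, ∀ᵐ p ∂(Q i), ‖p.1 - p.2‖ ≤ ‖x (σ i) - y i‖ + 2 * δ := by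
    intro i
    have a1 : ∀ᵐ p ∂(Q i), p.1 ∈ Metric.ball (x (σ i)) δ := by
      have : ∀ᵐ z ∂((Q i).map Prod.fst), z ∈ Metric.ball (x (σ i)) δ := by
        simp only [hQ, Measure.map_fst_prod, measure_univ, one_smul]
        refine (ae_map_iff measurable_fst.aemeasurable measurableSet_ball).2 ?_
        filter_upwards [hPae (σ i)] with p hp using hp.1
      exact ae_of_ae_map measurable_fst.aemeasurable this
    have a2 : ∀ᵐ p ∂(Q i), p.2 ∈ Metric.ball (y i) δ := by
      have : ∀ᵐ z ∂((Q i).map Prod.snd), z ∈ Metric.ball (y i) δ := by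
        simp only [hQ, Measure.map_snd_prod, measure_univ, one_smul]
        refine (ae_map_iff measurable_snd.aemeasurable measurableSet_ball).2 ?_
        filter_upwards [hPae i] with p hp using hp.2
      exact ae_of_ae_map measurable_snd.aemeasurable this
    filter_upwards [a1, a2] with p h1 h2
    rw [mem_ball_iff_norm] at h1 h2
    have t1 := norm_sub_le_norm_sub_add_norm_sub p.1 (x (σ i)) p.2
    have t2 := norm_sub_le_norm_sub_add_norm_sub (x (σ i)) (y i) p.2
    rw [norm_sub_rev (y i)] at t2
    linarith
  have iQ : ∀ i, Integrable (fun p : E × E => ‖p.1 - p.2‖) (Q i) := fun i =>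
    Integrable.of_bound hmeas.aestronglyMeasurable _ (by simpa using hQae i)
  have iT : Integrable (fun p : E × E => ‖p.1 - p.2‖) T :=
    integrable_finsetSum_measure.2 fun i _ => (iQ i).smul_measure hctop
  have bQ : ∀ i, ∫ p, ‖p.1 - p.2‖ ∂(Q i) ≤ ‖x (σ i) - y i‖ + 2 * δ := by
    intro i
    simpa using integral_mono_ae (iQ i) (integrable_const _) (hQae i)
  have bP : ∀ i, ‖x i - y i‖ - 2 * δ ≤ ∫ p, ‖p.1 - p.2‖ ∂(P i) := by
    intro i
    have : ∀ᵐ p ∂(P i), ‖x i - y i‖ - 2 * δ ≤ ‖p.1 - p.2‖ := by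
      filter_upwards [hPae i] with p hp
      obtain ⟨h1, h2⟩ := hp
      rw [mem_ball_iff_norm] at h1 h2
      have t1 := norm_sub_le_norm_sub_add_norm_sub (x i) p.1 (y i)
      have t2 := norm_sub_le_norm_sub_add_norm_sub p.1 p.2 (y i)
      rw [norm_sub_rev (x i) p.1] at t1
      linarith
    simpa using integral_mono_ae (integrable_const _) (iP i) this
  rw [integral_add_measure iρ iT] at key
  conv_lhs at key => rw [← hdec]
  rw [integral_add_measure iρ iS, hS, hT,
    integral_finsetSum_measure (fun i _ => (iP i).smul_measure hctop),
    integral_finsetSum_measure (fun i _ => (iQ i).smul_measure hctop)] at key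
  simp only [integral_smul_measure, smul_eq_mul] at key
  rw [← Finset.mul_sum, ← Finset.mul_sum] at key
  have hcr : 0 < c.toReal := ENNReal.toReal_pos hc0 hctop
  have key2 := le_of_mul_le_mul_left (le_of_add_le_add_left key) hcr
  have s1 := Finset.sum_le_sum fun i (_ : i ∈ Finset.univ) => bP i
  have s2 := Finset.sum_le_sum fun i (_ : i ∈ Finset.univ) => bQ i
  rw [Finset.sum_sub_distrib] at s1
  rw [Finset.sum_add_distrib] at s2
  simp only [Finset.sum_const, Finset.card_univ, nsmul_eq_mul] at s1 s2
  have : (Fintype.card ι : ℝ) * (2 * δ) = ε / 2 := by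
    rw [hδ]; field_simp; norm_num
  linarith

/-- **Gradient-norm-one property of a differentiable optimal critic.**
For an everywhere differentiable optimal 1-Lipschitz critic `f*` and an optimal
coupling `π*`, for `π*`-almost every `(x, y)` with `x ≠ y` and every `t ∈ (0,1)`,
the gradient of `f*` at `x_t = t·x + (1−t)·y` has Euclidean norm 1. -/
theorem gradient_norm_of_optimal_critic_eq_one (n : ℕ)
    (μ ν : Measure (EuclideanSpace ℝ (Fin n)))
    [IsProbabilityMeasure μ] [IsProbabilityMeasure ν]
    (hμ : Integrable (fun x => ‖x‖) μ) (hν : Integrable (fun x => ‖x‖) ν)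
    (f : EuclideanSpace ℝ (Fin n) → ℝ) (hf : LipschitzWith 1 f)
    (hfopt : ∀ g : EuclideanSpace ℝ (Fin n) → ℝ, LipschitzWith 1 g →
        ∫ x, g x ∂μ - ∫ x, g x ∂ν ≤ ∫ x, f x ∂μ - ∫ x, f x ∂ν)
    (hdiff : Differentiable ℝ f)
    (πs : Measure (EuclideanSpace ℝ (Fin n) × EuclideanSpace ℝ (Fin n)))
    [IsProbabilityMeasure πs]
    (hπ₁ : πs.map Prod.fst = μ) (hπ₂ : πs.map Prod.snd = ν)
    (hπopt : ∀ π : Measure (EuclideanSpace ℝ (Fin n) × EuclideanSpace ℝ (Fin n)),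
        IsProbabilityMeasure π → π.map Prod.fst = μ → π.map Prod.snd = ν →
          ∫ p, ‖p.1 - p.2‖ ∂πs ≤ ∫ p, ‖p.1 - p.2‖ ∂π) :
    ∀ᵐ p ∂πs, p.1 ≠ p.2 → ∀ t ∈ Set.Ioo (0 : ℝ) 1,
      ‖gradient f (t • p.1 + (1 - t) • p.2)‖ = 1 := by
  subst hπ₁ hπ₂
  have lipint : ∀ (κ : Measure (EuclideanSpace ℝ (Fin n))) [IsProbabilityMeasure κ],
      Integrable (fun x => ‖x‖) κ → ∀ g : EuclideanSpace ℝ (Fin n) → ℝ, LipschitzWith 1 g →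
      Integrable g κ := by
    intro κ _ hκ g hg
    refine ((integrable_const ‖g 0‖).add hκ).mono' hg.continuous.aestronglyMeasurable ?_
    refine Filter.Eventually.of_forall fun x => ?_
    have h1 := hg.dist_le_mul x 0
    rw [dist_eq_norm, dist_eq_norm] at h1
    simp only [NNReal.coe_one, one_mul, sub_zero] at h1
    have h2 := norm_sub_norm_le (g x) (g 0)
    simp only [Pi.add_apply]
    linarith
  have split : ∀ g : EuclideanSpace ℝ (Fin n) → ℝ, LipschitzWith 1 g →
      Integrable (fun p : EuclideanSpace ℝ (Fin n) × EuclideanSpace ℝ (Fin n) => g p.1 - g p.2) πs ∧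
      ∫ p, (g p.1 - g p.2) ∂πs = ∫ x, g x ∂(πs.map Prod.fst) - ∫ x, g x ∂(πs.map Prod.snd) := by
    intro g hg
    have i1 := (lipint _ hμ g hg).comp_measurable measurable_fst
    have i2 := (lipint _ hν g hg).comp_measurable measurable_snd
    refine ⟨i1.sub i2, ?_⟩
    rw [integral_map measurable_fst.aemeasurable hg.continuous.aestronglyMeasurable,
      integral_map measurable_snd.aemeasurable hg.continuous.aestronglyMeasurable]
    exact integral_sub i1 i2
  have hint : Integrable (fun p : EuclideanSpace ℝ (Fin n) × EuclideanSpace ℝ (Fin n) =>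
      ‖p.1 - p.2‖) πs := by
    have i1 := hμ.comp_measurable measurable_fst
    have i2 := hν.comp_measurable measurable_snd
    refine (i1.add i2).mono' (by fun_prop) (Filter.Eventually.of_forall fun p => ?_)
    simpa using norm_sub_le p.1 p.2
  obtain ⟨g, hg, hgΓ⟩ := exists_potential_s10 (Γ := πs.support)
    (fun k x y σ h => cyc_mono_s10 πs hint hπopt x y σ h)
  have lip : ∀ a b, f a - f b ≤ ‖a - b‖ := by
    intro a b
    have := hf.dist_le_mul a b
    rw [Real.dist_eq, dist_eq_norm] at this
    have := le_abs_self (f a - f b)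
    simp at *
    linarith
  obtain ⟨ig, eg⟩ := split g hg
  obtain ⟨jf, ef⟩ := split f hf
  have h1 : ∫ p, ‖p.1 - p.2‖ ∂πs ≤ ∫ p, (g p.1 - g p.2) ∂πs := by
    refine integral_mono_ae hint ig ?_
    filter_upwards [Measure.support_mem_ae (μ := πs)] with p hp using hgΓ p hp
  have h2 := hfopt g hg
  have hz : ∫ p, (‖p.1 - p.2‖ - (f p.1 - f p.2)) ∂πs = 0 := by
    refine le_antisymm ?_ (integral_nonneg fun p => sub_nonneg.2 (lip _ _))
    rw [integral_sub hint jf]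
    linarith
  rw [integral_eq_zero_iff_of_nonneg (fun p => sub_nonneg.2 (lip _ _)) (hint.sub jf)] at hz
  filter_upwards [hz] with p hp hne t ht
  refine grad_one f hf hdiff p.1 p.2 hne ?_ t ht
  simp only [Pi.zero_apply] at hp
  linarith
end
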